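/- Let n, d, k be integers with d ≥ 3 and 5 ≤ k ≤ n. Then E[|μ_k([2^n]^d)|] < (1/d)·(√2)^{16−k}. -/

import Mathlib

open MeasureTheory Finset

noncomputable section

/-- Points of the grid `[2^n]^d` (coordinates taken 0-based). -/
abbrev GridPt (n d : ℕ) := Fin d → Fin (2^n)

/-- Normalized counting "volume" of a subset of the grid: `Vol(A) = 2^{-nd}|A|`. -/
def Vol (n d : ℕ) (A : Finset (GridPt n d)) : ℝ := (A.card : ℝ) / 2^(n*d)

/-- The ℓ1 metric on the grid. -/
def gdist {n d : ℕ} (u v : GridPt n d) : ℝ := ∑ i, |((u i : ℕ) : ℝ) - ((v i : ℕ) : ℝ)|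

/-- Indices of the dyadic cubes in `D_k`. -/
abbrev CubeIdx (d k : ℕ) := Fin d → Fin (2^k)

/-- The dyadic cube of side-cardinality `2^(n-k)` indexed by `j ∈ {0,…,2^k-1}^d`. -/
def cube (n d k : ℕ) (j : CubeIdx d k) : Finset (GridPt n d) :=
  Finset.univ.filter (fun x => ∀ i, (x i : ℕ) / 2^(n-k) = (j i : ℕ))

/-- `p = 2^{-4d}`. -/
def pp (d : ℕ) : ℝ := ((2:ℝ)^(4*d))⁻¹

/-- The law of each `X_Q`: takes values `±1` with probability `p/2` each
and `0` with probability `1-p`. -/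
def stepMeasure (d : ℕ) : Measure ℝ :=
  (Real.toNNReal (pp d / 2)) • Measure.dirac (1:ℝ)
  + (Real.toNNReal (pp d / 2)) • Measure.dirac (-1:ℝ)
  + (Real.toNNReal (1 - pp d)) • Measure.dirac (0:ℝ)

instance (d : ℕ) : IsFiniteMeasure (stepMeasure d) := by
  unfold stepMeasure; infer_instance

/-- The joint law of the i.i.d. family `{X_Q}_{Q ∈ D_k}`; a sample point
`ω : CubeIdx d k → ℝ` records the values `X_Q = ω Q`. -/
def prodMeasure (d k : ℕ) : Measure (CubeIdx d k → ℝ) :=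
  Measure.pi fun _ => stepMeasure d

/-- `μ_k(A) = ∑_{Q ∈ D_k} p⁻¹ 2^k X_Q Vol(A ∩ Q)`, as a function of the sample point `ω`. -/
def muMeas (n d k : ℕ) (A : Finset (GridPt n d)) (ω : CubeIdx d k → ℝ) : ℝ :=
  ∑ j : CubeIdx d k, (pp d)⁻¹ * 2^k * ω j * Vol n d (A ∩ cube n d k j)

lemma pp_pos (d : ℕ) : 0 < pp d := by unfold pp; positivity

lemma pp_le_one (d : ℕ) : pp d ≤ 1 := by
  unfold pp
  exact inv_le_one_of_one_le₀ (one_le_pow₀ (by norm_num))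

lemma step_prob (d : ℕ) : IsProbabilityMeasure (stepMeasure d) := by
  constructor
  have h1 := pp_pos d
  have h2 := pp_le_one d
  have h : Real.toNNReal (pp d / 2) + Real.toNNReal (pp d / 2) + Real.toNNReal (1 - pp d) = 1 := by
    rw [← Real.toNNReal_add (by positivity) (by positivity),
      ← Real.toNNReal_add (by positivity) (by linarith)]
    rw [show pp d / 2 + pp d / 2 + (1 - pp d) = 1 by ring]
    simp
  unfold stepMeasure
  simp only [Measure.add_apply, Measure.smul_apply, measure_univ, ENNReal.smul_def, smul_eq_mul,
    mul_one]
  exact_mod_cast h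

lemma step_integral (d : ℕ) (f : ℝ → ℝ) : ∫ x, f x ∂(stepMeasure d)
    = pp d / 2 * f 1 + pp d / 2 * f (-1) + (1 - pp d) * f 0 := by
  have h1 := pp_pos d
  have h2 := pp_le_one d
  have hi : ∀ (a : ℝ) (c : NNReal), Integrable f (c • Measure.dirac a) := by
    intro a c
    exact (integrable_dirac (by simp)).smul_measure_nnreal
  unfold stepMeasure
  rw [integral_add_measure ((hi _ _).add_measure (hi _ _)) (hi _ _),
    integral_add_measure (hi _ _) (hi _ _)]
  simp only [integral_smul_nnreal_measure, integral_dirac, NNReal.smul_def, smul_eq_mul]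
  rw [Real.coe_toNNReal _ (by positivity), Real.coe_toNNReal _ (by linarith)]

lemma step_memLp (d : ℕ) : MemLp (fun x : ℝ => x) 2 (stepMeasure d) := by
  refine MemLp.of_bound (C := 1) (by fun_prop) ?_
  unfold stepMeasure
  have hm : MeasurableSet {x : ℝ | ‖x‖ ≤ 1} := measurableSet_le (by fun_prop) (by fun_prop)
  simp only [ae_add_measure_iff]
  refine ⟨⟨?_, ?_⟩, ?_⟩ <;>
  · apply Measure.ae_smul_measure
    rw [ae_dirac_iff hm]
    simp

lemma step_var (d : ℕ) : ProbabilityTheory.variance (fun x : ℝ => x) (stepMeasure d) = pp d := by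
  rw [ProbabilityTheory.variance_of_integral_eq_zero (by fun_prop)]
  · rw [step_integral d (fun x => x ^ 2)]; ring
  · rw [step_integral d (fun x => x)]; ring

lemma second_moment (d k : ℕ) (c : CubeIdx d k → ℝ) :
    (∫ ω, |∑ j, c j * ω j| ∂(prodMeasure d k)) ^ 2 ≤ ∑ j, c j ^ 2 * pp d := by
  have := step_prob d
  have hP : IsProbabilityMeasure (prodMeasure d k) := by unfold prodMeasure; infer_instance
  have hm : ∀ j, MemLp (fun x : ℝ => c j * x) 2 (stepMeasure d) :=
    fun j => (step_memLp d).const_mul (c j)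
  have hmj : ∀ j, MemLp (fun ω : CubeIdx d k → ℝ => c j * ω j) 2 (prodMeasure d k) := fun j =>
    (hm j).comp_measurePreserving (measurePreserving_eval (fun _ => stepMeasure d) j)
  have hM : MemLp (fun ω : CubeIdx d k → ℝ => ∑ j, c j * ω j) 2 (prodMeasure d k) :=
    memLp_finsetSum _ fun j _ => hmj j
  have hV := ProbabilityTheory.variance_sum_pi (μ := fun _ : CubeIdx d k => stepMeasure d)
    (X := fun j x => c j * x) hm
  have hvj : ∀ j, ProbabilityTheory.variance (fun x : ℝ => c j * x) (stepMeasure d)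
      = c j ^ 2 * pp d := by
    intro j
    have := ProbabilityTheory.variance_const_mul (c j) (fun x : ℝ => x) (stepMeasure d)
    rwa [step_var] at this
  rw [Finset.sum_congr rfl fun j _ => hvj j] at hV
  have h0 : ∫ ω, ∑ j, c j * ω j ∂(prodMeasure d k) = 0 := by
    rw [integral_finsetSum _ fun j _ => (hmj j).integrable one_le_two]
    refine Finset.sum_eq_zero fun j _ => ?_
    rw [integral_const_mul]
    have := integral_comp_eval (μ := fun _ : CubeIdx d k => stepMeasure d) (i := j)
      (f := fun x : ℝ => x) (by fun_prop)
    unfold prodMeasure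
    rw [this, step_integral d (fun x => x)]; ring
  have hs : (∑ j, fun ω : CubeIdx d k → ℝ => c j * ω j) = fun ω => ∑ j, c j * ω j := by
    ext; simp
  rw [hs] at hV
  change ProbabilityTheory.variance _ (prodMeasure d k) = _ at hV
  rw [ProbabilityTheory.variance_of_integral_eq_zero hM.aestronglyMeasurable.aemeasurable h0] at hV
  have hA := ProbabilityTheory.variance_nonneg (fun ω : CubeIdx d k → ℝ => |∑ j, c j * ω j|)
    (prodMeasure d k)
  have hM' : MemLp (fun ω : CubeIdx d k → ℝ => |∑ j, c j * ω j|) 2 (prodMeasure d k) := hM.abs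
  rw [ProbabilityTheory.variance_eq_sub hM'] at hA
  simp only [Pi.pow_apply, sq_abs] at hA
  linarith

lemma cube_card_le (n d k : ℕ) (j : CubeIdx d k) : (cube n d k j).card ≤ 2 ^ ((n - k) * d) := by
  have hpos : 0 < 2 ^ (n - k) := by positivity
  have h := Finset.card_le_card_of_injOn (s := cube n d k j)
    (t := (Finset.univ : Finset (Fin d → Fin (2 ^ (n - k)))))
    (fun x i => ⟨(x i : ℕ) % 2 ^ (n - k), Nat.mod_lt _ hpos⟩) (by simp) (by
      intro x hx y hy hxy
      simp only [cube, Finset.coe_filter, Finset.mem_univ, true_and, Set.mem_ofPred_eq] at hx hy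
      ext i
      have h1 := congrFun hxy i
      simp only [Fin.mk.injEq] at h1
      rw [← Nat.div_add_mod (x i : ℕ) (2 ^ (n - k)), ← Nat.div_add_mod (y i : ℕ) (2 ^ (n - k)),
        hx i, hy i, h1])
  simpa [pow_mul] using h

lemma vol_cube_le (n d k : ℕ) (hkn : k ≤ n) (j : CubeIdx d k) :
    Vol n d (Finset.univ ∩ cube n d k j) ≤ ((2 : ℝ) ^ (k * d))⁻¹ := by
  unfold Vol
  rw [Finset.univ_inter, div_le_iff₀ (by positivity)]
  have h : ((cube n d k j).card : ℝ) ≤ 2 ^ ((n - k) * d) := by exact_mod_cast cube_card_le n d k j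
  refine h.trans (le_of_eq ?_)
  have : n * d = k * d + (n - k) * d := by rw [← add_mul]; congr 1; omega
  rw [this, pow_add]
  field_simp

lemma sq_lt_pow (e : ℕ) : (e + 3) ^ 2 < 2 ^ (4 + e) := by
  induction e with
  | zero => norm_num
  | succ e ih =>
    rw [show 4 + (e + 1) = (4 + e) + 1 by ring, pow_succ 2 (4 + e)]
    generalize 2 ^ (4 + e) = a at ih ⊢
    nlinarith [Nat.zero_le e, Nat.zero_le (e * e)]

lemma key_nat (d k : ℕ) (hd : 3 ≤ d) (hk : 5 ≤ k) :
    d ^ 2 * 2 ^ (4 * d + 3 * k) < 2 ^ (16 + k * d) := by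
  obtain ⟨e, rfl⟩ := Nat.exists_eq_add_of_le' hd
  obtain ⟨m, rfl⟩ := Nat.exists_eq_add_of_le' hk
  calc (e + 3) ^ 2 * 2 ^ (4 * (e + 3) + 3 * (m + 5))
      < 2 ^ (4 + e) * 2 ^ (4 * (e + 3) + 3 * (m + 5)) := by
        gcongr
        exact sq_lt_pow e
    _ = 2 ^ ((4 + e) + (4 * (e + 3) + 3 * (m + 5))) := by rw [← pow_add]
    _ ≤ _ := by
        apply Nat.pow_le_pow_right (by norm_num)
        nlinarith [Nat.zero_le (m * e)]

/-- `E[|μ_k([2^n]^d)|] < (1/d)·(√2)^{16-k}`. -/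
theorem expected_total_mass_lt (n d k : ℕ) (hd : 3 ≤ d) (hk : 5 ≤ k) (hkn : k ≤ n) :
    ∫ ω, |muMeas n d k Finset.univ ω| ∂(prodMeasure d k)
      < (1/(d:ℝ)) * Real.sqrt 2 ^ ((16:ℝ) - (k:ℝ)) := by
  have hd0 : (0 : ℝ) < d := by exact_mod_cast (by omega : 0 < d)
  have hp := pp_pos d
  refine lt_of_pow_lt_pow_left₀ 2 (by positivity) ?_
  have hmu : ∀ ω, muMeas n d k Finset.univ ω
      = ∑ j, ((pp d)⁻¹ * 2 ^ k * Vol n d (Finset.univ ∩ cube n d k j)) * ω j := by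
    intro ω
    unfold muMeas
    exact Finset.sum_congr rfl fun j _ => by ring
  simp only [hmu]
  refine (second_moment d k _).trans_lt ?_
  have hb : ∑ j : CubeIdx d k,
      ((pp d)⁻¹ * 2 ^ k * Vol n d (Finset.univ ∩ cube n d k j)) ^ 2 * pp d
      ≤ ∑ j : CubeIdx d k, ((pp d)⁻¹ * 2 ^ k * ((2 : ℝ) ^ (k * d))⁻¹) ^ 2 * pp d := by
    refine Finset.sum_le_sum fun j _ => ?_
    have h0 : 0 ≤ Vol n d (Finset.univ ∩ cube n d k j) := by unfold Vol; positivity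
    have h1 := vol_cube_le n d k hkn j
    gcongr
  refine hb.trans_lt ?_
  have hR : ((1 / (d : ℝ)) * Real.sqrt 2 ^ ((16 : ℝ) - (k : ℝ))) ^ 2
      = 2 ^ 16 / (d ^ 2 * 2 ^ k) := by
    rw [Real.rpow_sub (by positivity), mul_pow, div_pow, div_pow]
    have h16 : Real.sqrt 2 ^ (16 : ℝ) = Real.sqrt 2 ^ 16 := by
      rw [← Real.rpow_natCast]; norm_num
    rw [h16, Real.rpow_natCast, ← pow_mul, ← pow_mul, mul_comm 16 2, mul_comm k 2, pow_mul,
      pow_mul, Real.sq_sqrt (by norm_num)]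
    field_simp
  rw [hR, Finset.sum_const, Finset.card_univ]
  have hc : (Fintype.card (CubeIdx d k) : ℝ) = 2 ^ (k * d) := by
    simp [pow_mul]
  rw [nsmul_eq_mul, hc, lt_div_iff₀ (by positivity)]
  have hkey : (d : ℝ) ^ 2 * 2 ^ (4 * d + 3 * k) < 2 ^ (16 + k * d) := by
    exact_mod_cast key_nat d k hd hk
  have hl : (2 : ℝ) ^ (k * d) * (((pp d)⁻¹ * 2 ^ k * ((2 : ℝ) ^ (k * d))⁻¹) ^ 2 * pp d)
      * (d ^ 2 * 2 ^ k) = ((d : ℝ) ^ 2 * 2 ^ (4 * d + 3 * k)) / 2 ^ (k * d) := by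
    unfold pp
    rw [pow_add, mul_comm 3 k, pow_mul 2 k 3]
    field_simp
  rw [hl, div_lt_iff₀ (by positivity), ← pow_add]
  exact hkey
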